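/- (Abstract form of the inactive-block permutation lemma.) Let p, n ∈ ℕ and consider the index set I consisting of p unpaired indices together with n pairs, written i and i′ for i ∈ {1,…,n} (so |I| = p + 2n). Let Q be a symmetric integer matrix indexed by I and S, A : I → ℤ, and set Λ_x = (−1)^{Q_{xx}−S_x} q^{S_x−1} a^{A_x} ∈ ℚ(q,a) for x ∈ I. Assume: (i) Λ_i·Λ_{j′} = Λ_{i′}·Λ_j for all i, j ∈ {1,…,n}; (ii) for each unpaired index k, the integer Q_{i,k} − Q_{i′,k} is the same for all i ∈ {1,…,n}; (iii) for all i ∈ {1,…,n} and every paired index k (i.e. k = l or k = l′ for some l ∈ {1,…,n}), one has Q_{i,k} − Q_{i′,k} = 2 − [l < i] − [k = i′], where l is the underlying label of k and [·] is the Iverson bracket. Let Q̃ be the symmetric matrix obtained from Q by exchanging the entries Q_{i,j′} and Q_{i′,j} (and correspondingly Q_{j′,i} and Q_{j,i′}) for every pair i < j in {1,…,n}, leaving all other entries unchanged. Then for every N ∈ ℕ one has F_N(Q,S,A) = F_N(Q̃,S,A) in ℚ(q,a); that is, the substituted quiver generating functions of Q and Q̃ coincide. -/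

import Mathlib

/-!
Group the dimension vectors `d` by their unpaired part `u` and by the sums
`m_i = d_i + d_{i′}`, and put `y_i = d_{i′}`. The hypotheses fix all primed entries of `Q`
relative to the entries `Q_{i,l}`, and for fixed `(u, m)` the exponent of `-q` becomes
`B(u, m) + ∑ i, (-y_i² + y_i (κ(u, m) - 2 σ_i))`, where `σ_i = ∑_{l > i} m_l` for `Q` and
`σ_i = ∑_{l < i} m_l` for `Q̃`, with the same `B` and `κ` (`Shape.eulerForm_vec`). As the ratio
`r = Λ_{i′} / Λ_i` does not depend on `i`, the sum over `y` factors over `i`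
(`Shape.term_eq`), and by the `q`-binomial theorem with base `P = q^{-2}` (`qbinomial`) the
`i`-th factor is `(-w P^{σ_i}; P)_{m_i} / (P; P)_{m_i}` with a common `w`. The product of the
numerators telescopes to `(-w; P)_{∑ m_i}` for both choices of `σ`
(`prod_qprod_lt`, `prod_qprod_gt`), so both sides agree on every group.
-/

/-!
STATEMENT 8: Abstract form of the inactive-block permutation lemma.

The index set `I` with `p` unpaired indices and `n` pairs `(i, i′)` is modeled as
`Idx p n = Fin p ⊕ (Fin n ⊕ Fin n)`, with embeddings `up k` (unpaired), `pr i`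
(the index `i`) and `pr' i` (the index `i′`).

Setup: `F = ℚ(q,a)` with `qv = q`, `av = a`;
`pochInv N = (q^{-2};q^{-2})_N`; `eulerForm Q d = ⟨d,d⟩_Q`;
`Lam Q S A x = Λ_x = (-1)^{Q_{xx}-S_x} q^{S_x-1} a^{A_x}`;
`FN Q S A N = F_N(Q,S,A)` is the degree-`N` coefficient of the substituted quiver
generating function, the sum over all `d : I → ℕ` with `Σ_x d_x = N`.

`Qswap Q` is the matrix `Q̃` obtained from `Q` by exchanging the entries `Q_{i,j′}`
and `Q_{i′,j}` (together with their transposed positions) for every pair `i < j`;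
equivalently, `Q̃_{pr a, pr' b} = Q_{pr' a, pr b}` and `Q̃_{pr' a, pr b} = Q_{pr a, pr' b}`
for all `a ≠ b`, with all other entries unchanged.
-/

open Finset

noncomputable section

/-- The field `ℚ(q,a)` of rational functions in two indeterminates over `ℚ`. -/
abbrev F : Type := FractionRing (MvPolynomial (Fin 2) ℚ)

/-- The indeterminate `q`. -/
def qv : F := algebraMap (MvPolynomial (Fin 2) ℚ) F (MvPolynomial.X 0)

/-- The indeterminate `a`. -/
def av : F := algebraMap (MvPolynomial (Fin 2) ℚ) F (MvPolynomial.X 1)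

/-- `(q^{-2};q^{-2})_N = ∏_{i=1}^N (1 - q^{-2i})`. -/
def pochInv (N : ℕ) : F := ∏ i ∈ Finset.range N, (1 - qv ^ (-(2 * ((i : ℤ) + 1))))

/-- The finset of `ι`-tuples of naturals with total sum `N`. -/
def tuples (ι : Type) [Fintype ι] [DecidableEq ι] (N : ℕ) : Finset (ι → ℕ) :=
  (Fintype.piFinset fun _ : ι => Finset.range (N + 1)).filter fun d => ∑ x, d x = N

/-- The index set: `p` unpaired indices together with `n` pairs `(i, i′)`. -/
abbrev Idx (p n : ℕ) : Type := Fin p ⊕ (Fin n ⊕ Fin n)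

/-- The `k`-th unpaired index. -/
def up {p n : ℕ} (k : Fin p) : Idx p n := Sum.inl k

/-- The index `i` of the `i`-th pair. -/
def pr {p n : ℕ} (i : Fin n) : Idx p n := Sum.inr (Sum.inl i)

/-- The index `i′` of the `i`-th pair. -/
def pr' {p n : ℕ} (i : Fin n) : Idx p n := Sum.inr (Sum.inr i)

/-- The Euler form `⟨d,d⟩_Q = Σ_{x,y} (δ_{xy} - Q_{xy}) d_x d_y`. -/
def eulerForm {ι : Type} [Fintype ι] [DecidableEq ι]
    (Q : Matrix ι ι ℤ) (d : ι → ℕ) : ℤ :=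
  ∑ x, ∑ y, ((if x = y then 1 else 0) - Q x y) * (d x : ℤ) * (d y : ℤ)

/-- `Λ_x = (-1)^{Q_{xx} - S_x} q^{S_x - 1} a^{A_x}`. -/
def Lam {ι : Type} [Fintype ι] [DecidableEq ι]
    (Q : Matrix ι ι ℤ) (S A : ι → ℤ) (x : ι) : F :=
  (-1 : F) ^ (Q x x - S x) * qv ^ (S x - 1) * av ^ (A x)

/-- The degree-`N` coefficient of the substituted quiver generating function:
`F_N(Q,S,A) = Σ_{d:I→ℕ, Σd=N} (-q)^{-⟨d,d⟩_Q} (∏ Λ_x^{d_x}) / (∏ (q^{-2};q^{-2})_{d_x})`. -/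
def FN {ι : Type} [Fintype ι] [DecidableEq ι]
    (Q : Matrix ι ι ℤ) (S A : ι → ℤ) (N : ℕ) : F :=
  ∑ d ∈ tuples ι N,
    (-qv) ^ (-(eulerForm Q d)) * (∏ x, Lam Q S A x ^ (d x)) / ∏ x, pochInv (d x)

/-- The matrix `Q̃` obtained from `Q` by exchanging `Q_{i,j′} ↔ Q_{i′,j}` (and the
transposed entries) for every pair `i < j`, all other entries unchanged. -/
def Qswap {p n : ℕ} (Q : Matrix (Idx p n) (Idx p n) ℤ) : Matrix (Idx p n) (Idx p n) ℤ :=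
  Matrix.of fun x y =>
    match x, y with
    | Sum.inr (Sum.inl i), Sum.inr (Sum.inr j) =>
        if i = j then Q (Sum.inr (Sum.inl i)) (Sum.inr (Sum.inr j))
        else Q (Sum.inr (Sum.inr i)) (Sum.inr (Sum.inl j))
    | Sum.inr (Sum.inr i), Sum.inr (Sum.inl j) =>
        if i = j then Q (Sum.inr (Sum.inr i)) (Sum.inr (Sum.inl j))
        else Q (Sum.inr (Sum.inl i)) (Sum.inr (Sum.inr j))
    | x, y => Q x y

/-! ### Nonvanishing in `ℚ(q,a)` -/

lemma qv_ne_zero : qv ≠ 0 := by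
  unfold qv
  rw [Ne, FaithfulSMul.algebraMap_eq_zero_iff]
  exact MvPolynomial.X_ne_zero 0

lemma av_ne_zero : av ≠ 0 := by
  unfold av
  rw [Ne, FaithfulSMul.algebraMap_eq_zero_iff]
  exact MvPolynomial.X_ne_zero 1

lemma qv_pow_ne_one (k : ℕ) : qv ^ (k + 1) ≠ 1 := by
  unfold qv
  rw [← map_pow, ← map_one (algebraMap (MvPolynomial (Fin 2) ℚ) F)]
  intro h
  have h := FaithfulSMul.algebraMap_injective _ _ h
  -- evaluating the polynomial identity `X₀ ^ (k + 1) = 1` at `0` gives `0 = 1`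
  have := congrArg (MvPolynomial.eval (fun _ => (0 : ℚ))) h
  simp at this

lemma pochInv_succ (N : ℕ) :
    pochInv (N + 1) = pochInv N * (1 - (qv ^ (-2 : ℤ)) ^ (N + 1)) := by
  unfold pochInv
  rw [prod_range_succ, ← zpow_natCast, ← zpow_mul]
  push_cast
  congr 3

lemma pochInv_ne_zero (N : ℕ) : pochInv N ≠ 0 := by
  induction N with
  | zero => simp [pochInv]
  | succ N ih =>
    rw [pochInv_succ]
    refine mul_ne_zero ih fun h => qv_pow_ne_one (2 * N + 1) ?_
    have h1 := (sub_eq_zero.mp h).symm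
    rw [← zpow_natCast, ← zpow_mul] at h1
    have h2 := congrArg (·⁻¹) h1
    simp only [← zpow_neg, inv_one] at h2
    rw [← zpow_natCast, ← h2]
    congr 1

lemma Lam_ne_zero {ι : Type} [Fintype ι] [DecidableEq ι]
    (Q : Matrix ι ι ℤ) (S A : ι → ℤ) (x : ι) : Lam Q S A x ≠ 0 := by
  unfold Lam
  exact mul_ne_zero (mul_ne_zero (zpow_ne_zero _ (by simp)) (zpow_ne_zero _ qv_ne_zero))
    (zpow_ne_zero _ av_ne_zero)

lemma mem_tuples {ι : Type} [Fintype ι] [DecidableEq ι] (N : ℕ) (d : ι → ℕ) :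
    d ∈ tuples ι N ↔ ∑ x, d x = N := by
  simp only [tuples, mem_filter, Fintype.mem_piFinset, mem_range, and_iff_right_iff_imp]
  rintro rfl x
  exact Nat.lt_succ_of_le (single_le_sum (f := d) (fun _ _ => Nat.zero_le _) (mem_univ x))

/-! ### The `q`-binomial theorem and telescoping products -/

/-- The product `(-w; P)_m = ∏_{k < m} (1 + w P^k)` with base `P = q^{-2}`. -/
def qprod (m : ℕ) (w : F) : F := ∏ k ∈ range m, (1 + w * (qv ^ (-2 : ℤ)) ^ k)

lemma qprod_add (m l : ℕ) (w : F) :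
    qprod (m + l) w = qprod m w * qprod l (w * (qv ^ (-2 : ℤ)) ^ m) := by
  unfold qprod
  rw [prod_range_add]
  congr 1
  refine prod_congr rfl fun k _ => ?_
  rw [pow_add]
  ring

/-- The summand `P^{y(y-1)/2} w^y / ((P;P)_x (P;P)_y)` of the `q`-binomial theorem. -/
def qterm (w : F) (x y : ℕ) : F :=
  (qv ^ (-2 : ℤ)) ^ (y.choose 2) * w ^ y / (pochInv x * pochInv y)

/-- Absorbing one factor of the denominator of `qterm` on the `x` side. -/
lemma qterm_left (w : F) (x y : ℕ) :
    (1 - (qv ^ (-2 : ℤ)) ^ (x + 1)) * qterm w (x + 1) y = qterm w x y := by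
  have h := pochInv_ne_zero (x + 1)
  have h0 := pochInv_ne_zero x
  have h1 := pochInv_ne_zero y
  unfold qterm
  rw [pochInv_succ] at *
  have h2 := right_ne_zero_of_mul h
  generalize 1 - (qv ^ (-2 : ℤ)) ^ (x + 1) = B at *
  field_simp

/-- Absorbing one factor of the denominator of `qterm` on the `y` side. -/
lemma qterm_right (w : F) (x y : ℕ) :
    (1 - (qv ^ (-2 : ℤ)) ^ (y + 1)) * qterm w x (y + 1)
      = w * (qv ^ (-2 : ℤ)) ^ y * qterm w x y := by
  have h := pochInv_ne_zero (y + 1)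
  have h0 := pochInv_ne_zero x
  have h1 := pochInv_ne_zero y
  unfold qterm
  rw [pochInv_succ] at *
  have h2 := right_ne_zero_of_mul h
  rw [Nat.choose_succ_succ' y 1, Nat.choose_one_right, pow_add _ y (y.choose _), pow_succ w]
  generalize 1 - (qv ^ (-2 : ℤ)) ^ (y + 1) = B at *
  field_simp

/-- The finite `q`-binomial theorem, in base `q^{-2}`. -/
lemma qbinomial (w : F) (m : ℕ) :
    ∑ z ∈ antidiagonal m, qterm w z.1 z.2 = qprod m w / pochInv m := by
  induction m with
  | zero => simp [qterm, qprod, pochInv]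
  | succ m ih =>
    have hm := pochInv_ne_zero (m + 1)
    rw [pochInv_succ] at *
    have h2 := right_ne_zero_of_mul hm
    have h3 := left_ne_zero_of_mul hm
    -- `1 - P^(x+y) = (1 - P^x) + P^x (1 - P^y)` splits the sum into two sums of degree `m`.
    have key : (1 - (qv ^ (-2 : ℤ)) ^ (m + 1)) *
        ∑ z ∈ antidiagonal (m + 1), qterm w z.1 z.2
        = (1 + w * (qv ^ (-2 : ℤ)) ^ m) * ∑ z ∈ antidiagonal m, qterm w z.1 z.2 := by
      have split : (1 - (qv ^ (-2 : ℤ)) ^ (m + 1)) *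
          ∑ z ∈ antidiagonal (m + 1), qterm w z.1 z.2
          = ∑ z ∈ antidiagonal (m + 1), (1 - (qv ^ (-2 : ℤ)) ^ z.1) * qterm w z.1 z.2
          + ∑ z ∈ antidiagonal (m + 1),
              (qv ^ (-2 : ℤ)) ^ z.1 * ((1 - (qv ^ (-2 : ℤ)) ^ z.2) * qterm w z.1 z.2) := by
        rw [← sum_add_distrib, mul_sum]
        refine sum_congr rfl fun z hz => ?_
        rw [HasAntidiagonal.mem_antidiagonal] at hz
        rw [← hz, pow_add]
        ring
      rw [split, Nat.sum_antidiagonal_succ, Nat.sum_antidiagonal_succ', add_mul, one_mul]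
      simp only [qterm_left, qterm_right, pow_zero, sub_self, zero_mul, mul_zero, zero_add]
      congr 1
      rw [mul_sum]
      refine sum_congr rfl fun z hz => ?_
      rw [HasAntidiagonal.mem_antidiagonal] at hz
      rw [← hz, pow_add]
      ring
    rw [ih] at key
    rw [eq_div_iff hm, mul_comm (pochInv m), ← mul_assoc, mul_comm (∑ z ∈ _, _), key]
    unfold qprod
    rw [prod_range_succ]
    field_simp

/-- The factors `(-w P^{m_0 + ⋯ + m_{i-1}}; P)_{m_i}` are consecutive pieces of the product
`(-w; P)_{∑ m_i}`. -/
lemma prod_qprod_lt (n : ℕ) (m : Fin n → ℕ) (w : F) :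
    ∏ i, qprod (m i) (w * (qv ^ (-2 : ℤ)) ^ (∑ l, (if l < i then 1 else 0) * m l))
      = qprod (∑ i, m i) w := by
  induction n with
  | zero => simp [qprod]
  | succ n ih =>
    rw [Fin.prod_univ_castSucc, Fin.sum_univ_castSucc (f := m), qprod_add,
      ← ih (fun i => m i.castSucc)]
    have h1 : ∀ i : Fin n, ∑ l : Fin (n + 1), (if l < i.castSucc then 1 else 0) * m l
        = ∑ l : Fin n, (if l < i then 1 else 0) * m l.castSucc := by
      intro i
      rw [Fin.sum_univ_castSucc, if_neg (Fin.castSucc_lt_last i).not_gt, zero_mul, add_zero]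
      simp only [Fin.castSucc_lt_castSucc_iff]
    have h2 : ∑ l : Fin (n + 1), (if l < Fin.last n then 1 else 0) * m l
        = ∑ l : Fin n, m l.castSucc := by
      rw [Fin.sum_univ_castSucc]
      simp [Fin.castSucc_lt_last]
    simp only [h1, h2]

lemma prod_qprod_gt (n : ℕ) (m : Fin n → ℕ) (w : F) :
    ∏ i, qprod (m i) (w * (qv ^ (-2 : ℤ)) ^ (∑ l, (if i < l then 1 else 0) * m l))
      = qprod (∑ i, m i) w := by
  have h := prod_qprod_lt n (fun i => m i.rev) w
  rw [← Equiv.prod_comp Fin.revPerm]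
  rw [← Equiv.sum_comp Fin.revPerm m]
  simp only [Fin.revPerm_apply]
  rw [← h]
  refine prod_congr rfl fun i _ => ?_
  rw [← Equiv.sum_comp Fin.revPerm]
  simp [Fin.rev_lt_rev]

/-! ### The Euler form on a group of dimension vectors -/

/-- The dimension vector with unpaired part `u`, entries `x i` at `i` and `y i` at `i′`. -/
def vec {p n : ℕ} (u : Fin p → ℕ) (x y : Fin n → ℕ) : Idx p n → ℕ :=
  Sum.elim u (Sum.elim x y)

/-- The common shape of `Q` and `Q̃`: both are symmetric and, relative to the entries
`Q_{i,l}`, their primed entries are prescribed by a function `ρ` with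
`ρ i l + ρ l i = [i ≠ l]` (`ρ i l = [l < i]` for `Q`, `ρ i l = [i < l]` for `Q̃`), and `c k` is the common value of
`Q_{i,k} - Q_{i′,k}`. -/
structure Shape {p n : ℕ} (Q : Matrix (Idx p n) (Idx p n) ℤ) (c : Fin p → ℤ)
    (ρ : Fin n → Fin n → ℕ) : Prop where
  symm : ∀ x y, Q x y = Q y x
  unpaired : ∀ i k, Q (pr' i) (up k) = Q (pr i) (up k) - c k
  primed_left : ∀ i l, Q (pr' i) (pr l) = Q (pr i) (pr l) - 2 + ρ i l
  primed_both : ∀ i l, Q (pr' i) (pr' l) = Q (pr i) (pr l) - 3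
  total : ∀ i l, (ρ i l : ℤ) + ρ l i = 1 - if i = l then 1 else 0

/-- The Euler form of a symmetric matrix, split into its unpaired, mixed and paired parts. -/
lemma eulerForm_expand {p n : ℕ} (Q : Matrix (Idx p n) (Idx p n) ℤ)
    (hs : ∀ x y, Q x y = Q y x) (u : Fin p → ℕ) (x y : Fin n → ℕ) :
    eulerForm Q (vec u x y) =
      ∑ k, ∑ k', ((if k = k' then 1 else 0) - Q (up k) (up k')) * (u k : ℤ) * (u k' : ℤ)
      + ∑ i, ∑ k, -2 * (Q (pr i) (up k) * x i + Q (pr' i) (up k) * y i) * (u k : ℤ)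
      + ∑ i, ∑ l, (((if i = l then 1 else 0) - Q (pr i) (pr l)) * (x i : ℤ) * (x l : ℤ)
        - Q (pr' l) (pr i) * (x i : ℤ) * (y l : ℤ) - Q (pr' i) (pr l) * (y i : ℤ) * (x l : ℤ)
        + ((if i = l then 1 else 0) - Q (pr' i) (pr' l)) * (y i : ℤ) * (y l : ℤ)) := by
  have e1 : ∑ k, ∑ i, -Q (up k) (pr i) * (u k : ℤ) * (x i : ℤ)
      = ∑ i, ∑ k, -Q (pr i) (up k) * (u k : ℤ) * (x i : ℤ) := by
    rw [sum_comm]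
    simp only [hs (up _) (pr _)]
  have e2 : ∑ k, ∑ i, -Q (up k) (pr' i) * (u k : ℤ) * (y i : ℤ)
      = ∑ i, ∑ k, -Q (pr' i) (up k) * (u k : ℤ) * (y i : ℤ) := by
    rw [sum_comm]
    simp only [hs (up _) (pr' _)]
  have e3 : eulerForm Q (vec u x y) =
      (∑ k, ∑ k', ((if k = k' then 1 else 0) - Q (up k) (up k')) * (u k : ℤ) * (u k' : ℤ)
      + (∑ k, ∑ i, -Q (up k) (pr i) * (u k : ℤ) * (x i : ℤ)
      + ∑ k, ∑ i, -Q (up k) (pr' i) * (u k : ℤ) * (y i : ℤ)))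
      + ((∑ i, ∑ k, -Q (pr i) (up k) * (x i : ℤ) * (u k : ℤ)
      + (∑ i, ∑ l, ((if i = l then 1 else 0) - Q (pr i) (pr l)) * (x i : ℤ) * (x l : ℤ)
      + ∑ i, ∑ l, -Q (pr i) (pr' l) * (x i : ℤ) * (y l : ℤ)))
      + (∑ i, ∑ k, -Q (pr' i) (up k) * (y i : ℤ) * (u k : ℤ)
      + (∑ i, ∑ l, -Q (pr' i) (pr l) * (y i : ℤ) * (x l : ℤ)
      + ∑ i, ∑ l, ((if i = l then 1 else 0) - Q (pr' i) (pr' l)) * (y i : ℤ) * (y l : ℤ)))) := by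
    simp only [eulerForm, Fintype.sum_sum_type, sum_add_distrib, vec, Sum.elim_inl, Sum.elim_inr,
      Sum.inl.injEq, Sum.inr.injEq, reduceCtorEq, if_false, zero_sub, up, pr, pr']
    ring
  have e4 : ∑ i, ∑ k, -2 * (Q (pr i) (up k) * x i + Q (pr' i) (up k) * y i) * (u k : ℤ)
      = ∑ i, ∑ k, -Q (pr i) (up k) * (u k : ℤ) * (x i : ℤ)
      + ∑ i, ∑ k, -Q (pr' i) (up k) * (u k : ℤ) * (y i : ℤ)
      + ∑ i, ∑ k, -Q (pr i) (up k) * (x i : ℤ) * (u k : ℤ)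
      + ∑ i, ∑ k, -Q (pr' i) (up k) * (y i : ℤ) * (u k : ℤ) := by
    simp only [← sum_add_distrib]
    refine sum_congr rfl fun i _ => sum_congr rfl fun k _ => ?_
    ring
  have e5 : ∑ i, ∑ l, (((if i = l then 1 else 0) - Q (pr i) (pr l)) * (x i : ℤ) * (x l : ℤ)
        - Q (pr' l) (pr i) * (x i : ℤ) * (y l : ℤ) - Q (pr' i) (pr l) * (y i : ℤ) * (x l : ℤ)
        + ((if i = l then 1 else 0) - Q (pr' i) (pr' l)) * (y i : ℤ) * (y l : ℤ))
      = ∑ i, ∑ l, ((if i = l then 1 else 0) - Q (pr i) (pr l)) * (x i : ℤ) * (x l : ℤ)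
      + ∑ i, ∑ l, -Q (pr i) (pr' l) * (x i : ℤ) * (y l : ℤ)
      + ∑ i, ∑ l, -Q (pr' i) (pr l) * (y i : ℤ) * (x l : ℤ)
      + ∑ i, ∑ l, ((if i = l then 1 else 0) - Q (pr' i) (pr' l)) * (y i : ℤ) * (y l : ℤ) := by
    simp only [← sum_add_distrib]
    refine sum_congr rfl fun i _ => sum_congr rfl fun l _ => ?_
    rw [hs (pr i) (pr' l)]
    ring
  rw [e3, e1, e2, e4, e5]
  ring

/-- The Euler form in terms of `m = x + y` and `y`: apart from `∑ y_i²`, it is affine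
in `y` for fixed `m`, and the `y = 0` part does not involve `ρ`. -/
lemma Shape.eulerForm_vec {p n : ℕ} {Q : Matrix (Idx p n) (Idx p n) ℤ} {c : Fin p → ℤ}
    {ρ : Fin n → Fin n → ℕ} (h : Shape Q c ρ) (u : Fin p → ℕ) (x y : Fin n → ℕ) :
    -eulerForm Q (vec u x y) = -eulerForm Q (vec u (fun i => x i + y i) 0) +
      ∑ i, (-(y i : ℤ) ^ 2 + y i * ((-2 * (∑ k, c k * u k) - 2 * ∑ l, ((x l + y l : ℕ) : ℤ))
        - 2 * ∑ l, (ρ l i : ℤ) * ((x l + y l : ℕ) : ℤ))) := by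
  -- Modulo the antisymmetric expression `G i l - G l i`, the paired parts agree termwise.
  let G : Fin n → Fin n → ℤ := fun i l =>
    (2 - (if i = l then 1 else 0) - (ρ l i : ℤ)) * x i * y l + ρ i l * y i * y l
  have hG : ∑ i, ∑ l, (G i l - G l i) = 0 := by
    simp only [sum_sub_distrib]
    rw [sum_comm (f := fun i l => G l i), sub_self]
  have mixed : ∑ i, ∑ k, -2 * (Q (pr i) (up k) * x i + Q (pr' i) (up k) * y i) * (u k : ℤ)
      = ∑ i, ∑ k, -2 * (Q (pr i) (up k) * ((x i + y i : ℕ) : ℤ)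
          + Q (pr' i) (up k) * ((0 : ℕ) : ℤ)) * (u k : ℤ)
        + ∑ i, (y i : ℤ) * (2 * ∑ k, c k * u k) := by
    simp only [mul_sum, ← sum_add_distrib]
    refine sum_congr rfl fun i _ => sum_congr rfl fun k _ => ?_
    rw [h.unpaired]
    push_cast
    ring
  have paired : ∑ i, ∑ l, (((if i = l then 1 else 0) - Q (pr i) (pr l)) * (x i : ℤ) * (x l : ℤ)
        - Q (pr' l) (pr i) * (x i : ℤ) * (y l : ℤ) - Q (pr' i) (pr l) * (y i : ℤ) * (x l : ℤ)
        + ((if i = l then 1 else 0) - Q (pr' i) (pr' l)) * (y i : ℤ) * (y l : ℤ))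
      = ∑ i, ∑ l, (((if i = l then 1 else 0) - Q (pr i) (pr l)) * ((x i + y i : ℕ) : ℤ)
          * ((x l + y l : ℕ) : ℤ)
        - Q (pr' l) (pr i) * ((x i + y i : ℕ) : ℤ) * ((0 : ℕ) : ℤ)
        - Q (pr' i) (pr l) * ((0 : ℕ) : ℤ) * ((x l + y l : ℕ) : ℤ)
        + ((if i = l then 1 else 0) - Q (pr' i) (pr' l)) * ((0 : ℕ) : ℤ) * ((0 : ℕ) : ℤ))
      + ∑ i, ∑ l, ((if i = l then (y i : ℤ) * y l else 0)
        + (y i * (2 * ((x l + y l : ℕ) : ℤ)) + y i * (2 * (ρ l i * ((x l + y l : ℕ) : ℤ)))))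
      + ∑ i, ∑ l, (G i l - G l i) := by
    simp only [← sum_add_distrib]
    refine sum_congr rfl fun i _ => sum_congr rfl fun l _ => ?_
    have hρ := h.total i l
    simp only [G, eq_comm (a := l) (b := i)]
    rw [h.primed_left, h.primed_left, h.primed_both, h.symm (pr l) (pr i),
      eq_sub_of_add_eq hρ]
    push_cast
    split_ifs <;> ring
  rw [eulerForm_expand Q h.symm, eulerForm_expand Q h.symm, mixed, paired, hG]
  have rest : ∑ i, ∑ l, ((if i = l then (y i : ℤ) * y l else 0)
        + (y i * (2 * ((x l + y l : ℕ) : ℤ)) + y i * (2 * (ρ l i * ((x l + y l : ℕ) : ℤ)))))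
      + ∑ i, (y i : ℤ) * (2 * ∑ k, c k * u k)
      + ∑ i, (-(y i : ℤ) ^ 2 + y i * ((-2 * (∑ k, c k * u k) - 2 * ∑ l, ((x l + y l : ℕ) : ℤ))
        - 2 * ∑ l, (ρ l i : ℤ) * ((x l + y l : ℕ) : ℤ))) = 0 := by
    rw [← sum_add_distrib, ← sum_add_distrib]
    refine sum_eq_zero fun i _ => ?_
    rw [sum_add_distrib, sum_add_distrib, sum_ite_eq, if_pos (mem_univ i), ← mul_sum, ← mul_sum,
      ← mul_sum, ← mul_sum]
    ring
  simp only [Pi.zero_apply]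
  linear_combination -rest

/-! ### Summation over a group -/

lemma zpow_sum_eq_prod {ι : Type} (s : Finset ι) (f : ι → ℤ) (t : F) (ht : t ≠ 0) :
    t ^ (∑ i ∈ s, f i) = ∏ i ∈ s, t ^ f i := by
  classical
  induction s using Finset.induction_on with
  | empty => simp
  | insert a s ha ih => rw [sum_insert ha, prod_insert ha, zpow_add₀ ht, ih]

lemma two_mul_choose_two (y : ℕ) : 2 * (y.choose 2 : ℤ) = y ^ 2 - y := by
  induction y with
  | zero => simp
  | succ y ih =>
    rw [Nat.choose_succ_succ' y 1, Nat.choose_one_right]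
    push_cast
    linarith

/-- The quadratic exponent `-y²` of `-q` is the `P^{y(y-1)/2}` of the `q`-binomial theorem,
up to a factor absorbed in `w^y`; the sign is absorbed because `(-q)^{-2} = P`. -/
lemma zpow_quadratic (κ : ℤ) (s y : ℕ) (r : F) :
    (-qv) ^ (-(y : ℤ) ^ 2 + y * (κ - 2 * s)) * r ^ y =
      (qv ^ (-2 : ℤ)) ^ (y.choose 2) * ((-qv) ^ (κ - 1) * r * (qv ^ (-2 : ℤ)) ^ s) ^ y := by
  have ht : (-qv) ≠ 0 := neg_ne_zero.mpr qv_ne_zero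
  have hP : qv ^ (-2 : ℤ) = (-qv) ^ (-2 : ℤ) := (Even.neg_zpow (by decide) qv).symm
  rw [hP]
  simp only [← zpow_natCast, ← zpow_mul, mul_zpow]
  rw [mul_right_comm _ (r ^ (y : ℤ)), ← zpow_add₀ ht, ← mul_assoc, ← zpow_add₀ ht]
  congr 2
  linear_combination two_mul_choose_two y

/-- For fixed `m = x + y`, a summand of the generating function is a factor depending only on
`u` and `m`, times a product over `i` of summands of the `q`-binomial theorem. -/
lemma Shape.term_eq {p n : ℕ} {Q : Matrix (Idx p n) (Idx p n) ℤ} {c : Fin p → ℤ}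
    {ρ : Fin n → Fin n → ℕ} (h : Shape Q c ρ) (L : Idx p n → F) (r : F)
    (hr : ∀ i, L (pr' i) = r * L (pr i)) (u : Fin p → ℕ) (x y : Fin n → ℕ) :
    (-qv) ^ (-(eulerForm Q (vec u x y))) * (∏ a, L a ^ (vec u x y a)) /
        ∏ a, pochInv (vec u x y a)
      = (-qv) ^ (-(eulerForm Q (vec u (fun i => x i + y i) 0))) *
        ((∏ k, L (up k) ^ u k) / ∏ k, pochInv (u k)) * (∏ i, L (pr i) ^ (x i + y i)) *
        ∏ i, qterm ((-qv) ^ (-2 * (∑ k, c k * u k) - 2 * ∑ l, ((x l + y l : ℕ) : ℤ) - 1) * r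
          * (qv ^ (-2 : ℤ)) ^ (∑ l, ρ l i * (x l + y l))) (x i) (y i) := by
  have ht : (-qv) ≠ 0 := neg_ne_zero.mpr qv_ne_zero
  have hi : ∀ i, qterm ((-qv) ^ (-2 * (∑ k, c k * u k) - 2 * ∑ l, ((x l + y l : ℕ) : ℤ) - 1) * r
          * (qv ^ (-2 : ℤ)) ^ (∑ l, ρ l i * (x l + y l))) (x i) (y i)
      = (-qv) ^ (-(y i : ℤ) ^ 2 +
          y i * ((-2 * (∑ k, c k * u k) - 2 * ∑ l, ((x l + y l : ℕ) : ℤ))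
          - 2 * ∑ l, (ρ l i : ℤ) * ((x l + y l : ℕ) : ℤ))) * r ^ y i
        / (pochInv (x i) * pochInv (y i)) := by
    intro i
    unfold qterm
    rw [← zpow_quadratic]
    push_cast
    rfl
  rw [h.eulerForm_vec, zpow_add₀ ht, zpow_sum_eq_prod _ _ _ ht]
  simp only [hi, Fintype.prod_sum_type, vec, Sum.elim_inl, Sum.elim_inr]
  change _ * ((∏ k, L (up k) ^ u k) * ((∏ i, L (pr i) ^ x i) * ∏ i, L (pr' i) ^ y i)) / _ = _
  simp only [hr, mul_pow, pow_add, prod_mul_distrib, prod_div_distrib]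
  simp only [div_eq_mul_inv, mul_inv]
  ring

/-- The sum over all dimension vectors with given unpaired part `u` and given sums
`m i = d_i + d_{i′}`. -/
lemma Shape.sum_fibre {p n : ℕ} {Q : Matrix (Idx p n) (Idx p n) ℤ} {c : Fin p → ℤ}
    {ρ : Fin n → Fin n → ℕ} (h : Shape Q c ρ) (L : Idx p n → F) (r : F)
    (hr : ∀ i, L (pr' i) = r * L (pr i)) (u : Fin p → ℕ) (m : Fin n → ℕ)
    (hρ : ∀ w, ∏ i, qprod (m i) (w * (qv ^ (-2 : ℤ)) ^ (∑ l, ρ l i * m l))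
      = qprod (∑ i, m i) w) :
    ∑ f ∈ Fintype.piFinset (fun i => antidiagonal (m i)),
      (-qv) ^ (-(eulerForm Q (vec u (fun i => (f i).1) (fun i => (f i).2)))) *
        (∏ a, L a ^ (vec u (fun i => (f i).1) (fun i => (f i).2) a)) /
        ∏ a, pochInv (vec u (fun i => (f i).1) (fun i => (f i).2) a)
      = (-qv) ^ (-(eulerForm Q (vec u m 0))) *
        ((∏ k, L (up k) ^ u k) / ∏ k, pochInv (u k)) * (∏ i, L (pr i) ^ m i) *
        (qprod (∑ i, m i) ((-qv) ^ (-2 * (∑ k, c k * u k) - 2 * ∑ l, (m l : ℤ) - 1) * r)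
          / ∏ i, pochInv (m i)) := by
  rw [← hρ, ← prod_div_distrib (f := fun i => qprod (m i) _)]
  rw [prod_congr rfl fun i _ => (qbinomial _ (m i)).symm, prod_univ_sum, mul_sum]
  refine sum_congr rfl fun f hf => ?_
  have hm : ∀ i, (f i).1 + (f i).2 = m i := by
    simpa only [Fintype.mem_piFinset, HasAntidiagonal.mem_antidiagonal] using hf
  have ht := h.term_eq L r hr u (fun i => (f i).1) (fun i => (f i).2)
  simp only [hm] at ht
  exact ht

/-- Grouping the dimension vectors of total `N` by their unpaired part and by the
sums `d_i + d_{i′}`. -/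
lemma sum_tuples_congr {p n : ℕ} (N : ℕ) (f g : (Idx p n → ℕ) → F)
    (hfg : ∀ (u : Fin p → ℕ) (m : Fin n → ℕ),
      ∑ z ∈ Fintype.piFinset (fun i => antidiagonal (m i)),
        f (vec u (fun i => (z i).1) (fun i => (z i).2)) =
      ∑ z ∈ Fintype.piFinset (fun i => antidiagonal (m i)),
        g (vec u (fun i => (z i).1) (fun i => (z i).2))) :
    ∑ d ∈ tuples (Idx p n) N, f d = ∑ d ∈ tuples (Idx p n) N, g d := by
  let φ : (Idx p n → ℕ) → (Fin p → ℕ) × (Fin n → ℕ) :=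
    fun d => (fun k => d (up k), fun i => d (pr i) + d (pr' i))
  have hmaps : ∀ d ∈ tuples (Idx p n) N, φ d ∈ (tuples (Idx p n) N).image φ :=
    fun d hd => mem_image_of_mem φ hd
  rw [← sum_fiberwise_of_maps_to hmaps f, ← sum_fiberwise_of_maps_to hmaps g]
  refine sum_congr rfl fun b hb => ?_
  obtain ⟨d₀, hd₀, rfl⟩ := mem_image.mp hb
  rw [mem_tuples] at hd₀
  have fibre : ∀ f : (Idx p n → ℕ) → F,
      ∑ d ∈ tuples (Idx p n) N with φ d = φ d₀, f d =
      ∑ z ∈ Fintype.piFinset (fun i => antidiagonal ((φ d₀).2 i)),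
        f (vec (φ d₀).1 (fun i => (z i).1) (fun i => (z i).2)) := by
    intro f
    have total : ∀ d, ∑ a, d a = ∑ k, (φ d).1 k + ∑ i, (φ d).2 i := by
      intro d
      simp [φ, Fintype.sum_sum_type, sum_add_distrib, up, pr, pr']
    refine sum_nbij' (fun d i => (d (pr i), d (pr' i)))
      (fun z => vec (φ d₀).1 (fun i => (z i).1) (fun i => (z i).2)) ?_ ?_ ?_ ?_ ?_
    · intro d hd
      rw [mem_filter] at hd
      simp only [Fintype.mem_piFinset, HasAntidiagonal.mem_antidiagonal]
      intro i
      exact congrFun (congrArg Prod.snd hd.2) i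
    · intro z hz
      simp only [Fintype.mem_piFinset, HasAntidiagonal.mem_antidiagonal] at hz
      have hφ : φ (vec (φ d₀).1 (fun i => (z i).1) (fun i => (z i).2)) = φ d₀ := by
        refine Prod.ext rfl (funext fun i => hz i)
      rw [mem_filter, mem_tuples, total, hφ, ← total]
      exact ⟨hd₀, rfl⟩
    · intro d hd
      rw [mem_filter] at hd
      rw [← hd.2]
      funext a
      rcases a with k | i | i <;> rfl
    · intro z hz
      rfl
    · intro d hd
      rw [mem_filter] at hd
      congr 1
      rw [← hd.2]
      funext a
      rcases a with k | i | i <;> rfl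
  rw [fibre, fibre, hfg]

/-! ### The permutation lemma -/

theorem statement8 (p n : ℕ)
    (Q : Matrix (Idx p n) (Idx p n) ℤ) (hQ : Q.IsSymm)
    (S A : Idx p n → ℤ)
    (hΛ : ∀ i j : Fin n,
      Lam Q S A (pr i) * Lam Q S A (pr' j) = Lam Q S A (pr' i) * Lam Q S A (pr j))
    (hunpaired : ∀ k : Fin p, ∀ i i' : Fin n,
      Q (pr i) (up k) - Q (pr' i) (up k) = Q (pr i') (up k) - Q (pr' i') (up k))
    (hpaired : ∀ i l : Fin n,
      Q (pr i) (pr l) - Q (pr' i) (pr l) = 2 - (if l < i then 1 else 0) ∧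
      Q (pr i) (pr' l) - Q (pr' i) (pr' l) =
        2 - (if l < i then 1 else 0) - (if l = i then 1 else 0)) :
    ∀ N : ℕ, FN Q S A N = FN (Qswap Q) S A N := by
  intro N
  have hs : ∀ x y, Q x y = Q y x := fun x y => hQ.apply y x
  obtain ⟨c, hc⟩ : ∃ c : Fin p → ℤ, ∀ i k, Q (pr' i) (up k) = Q (pr i) (up k) - c k := by
    rcases isEmpty_or_nonempty (Fin n) with hn | ⟨⟨i₀⟩⟩
    · exact ⟨0, fun i => hn.elim i⟩
    · refine ⟨fun k => Q (pr i₀) (up k) - Q (pr' i₀) (up k), fun i k => ?_⟩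
      have := hunpaired k i i₀
      linarith
  obtain ⟨r, hr⟩ : ∃ r : F, ∀ i, Lam Q S A (pr' i) = r * Lam Q S A (pr i) := by
    rcases isEmpty_or_nonempty (Fin n) with hn | ⟨⟨i₀⟩⟩
    · exact ⟨0, fun i => hn.elim i⟩
    · refine ⟨Lam Q S A (pr' i₀) / Lam Q S A (pr i₀), fun i => ?_⟩
      have := Lam_ne_zero Q S A (pr i₀)
      rw [div_mul_eq_mul_div, ← hΛ i₀ i]
      field_simp
  have hQshape : Shape Q c (fun i l => if l < i then 1 else 0) := by
    refine ⟨hs, hc, fun i l => ?_, fun i l => ?_, fun i l => ?_⟩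
    · have := (hpaired i l).1
      push_cast
      linarith
    · have h1 := (hpaired i l).2
      have h2 := (hpaired l i).1
      rw [hs (pr l) (pr i), hs (pr' l) (pr i)] at h2
      rcases lt_trichotomy i l with h | h | h
      · simp [h, h.not_gt, h.ne'] at h1 h2; linarith
      · simp [h] at h1 h2; subst h; linarith
      · simp [h, h.not_gt, h.ne] at h1 h2; linarith
    · rcases lt_trichotomy i l with h | h | h
      · simp [h, h.not_gt, h.ne]
      · simp [h]
      · simp [h, h.not_gt, h.ne']
  have hQswap : Shape (Qswap Q) c (fun i l => if i < l then 1 else 0) := by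
    refine ⟨fun x y => ?_, hc, fun i l => ?_, fun i l => ?_, fun i l => ?_⟩
    · rcases x with k | i | i <;> rcases y with k' | j | j <;>
        simp only [Qswap, Matrix.of_apply] <;>
        first
          | exact hs _ _
          | (simp only [eq_comm (a := j) (b := i)]; split_ifs <;> exact hs _ _)
    · have h1 := hQshape.primed_left l i
      have h2 := hQshape.primed_left i l
      rw [hs (pr l) (pr i), hs (pr' l) (pr i)] at h1
      change (if i = l then Q (pr' i) (pr l) else Q (pr i) (pr' l)) = Q (pr i) (pr l) - 2 + _
      by_cases h : i = l
      · subst h; simpa using h2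
      · rw [if_neg h]; exact h1
    · exact hQshape.primed_both i l
    · have := hQshape.total l i
      simp only [eq_comm (a := l)] at this
      exact this
  have hLam : Lam (Qswap Q) S A = Lam Q S A := by
    funext x
    rcases x with k | i | i <;> rfl
  unfold FN
  rw [hLam]
  refine sum_tuples_congr N _ _ fun u m => ?_
  rw [hQshape.sum_fibre _ r hr u m (prod_qprod_gt n m),
    hQswap.sum_fibre _ r hr u m (prod_qprod_lt n m)]
  -- For `y = 0` only the entries common to `Q` and `Qswap Q` contribute to the Euler form.
  have hE : eulerForm (Qswap Q) (vec u m 0) = eulerForm Q (vec u m 0) := by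
    unfold eulerForm
    refine sum_congr rfl fun x _ => sum_congr rfl fun y _ => ?_
    rcases x with k | i | i <;> rcases y with k' | j | j <;> simp [vec, Qswap]
  rw [hE]

end
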